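/- Let m < r < F be positive integers such that m does not divide r and F does not belong to the submonoid ⟨m,r⟩ of ℕ generated by m and r. Then S = ⟨m,r⟩ ∪ {n ∈ ℕ : n ≥ F+1} is an element of 𝓡(F,m) whose 𝓡(F,m)-rank equals 1. Conversely, every element of 𝓡(F,m) with 𝓡(F,m)-rank equal to 1 is of the form ⟨m,r⟩ ∪ {n ∈ ℕ : n ≥ F+1} for some such r. -/

import Mathlib

/-!
The family `RFm F m` consists of the additively closed sets that contain `0`, `m` and every `n > F`,
miss `F`, and have no positive element below `m` (`mem_RFm_iff`). All these conditions except
`F ∉ S` and the bound by `m` are closure conditions. Hence `Delta F m` is the minimum of the family,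
and for `m < x` the least member containing `x`, if there is one, is `⟨m, x⟩ ∪ {F + 1, →}`, which
exists exactly when `F ∉ ⟨m, x⟩` (`gen_mem`, `RGen_singleton`).

An `RFm F m`-set `X` avoids `Delta F m`, so it is finite and `X.ncard = 0` forces `X = ∅`,
which generates `Delta F m`. So `⟨m, r⟩ ∪ {F + 1, →}`, which contains `r ∉ Delta F m`, has rank
exactly `1`. Conversely, a member of rank `1` is generated by some `{x}` with `x ∉ Delta F m`
contained in a member of the family, and then `x` is the required `r'`.
-/

/-- A numerical semigroup: a submonoid of (ℕ,+) with finite complement. -/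
def IsNumericalSemigroup (S : Set ℕ) : Prop :=
  0 ∈ S ∧ (∀ a ∈ S, ∀ b ∈ S, a + b ∈ S) ∧ Sᶜ.Finite

/-- The multiplicity m(S): least positive element of S. -/
noncomputable def mult (S : Set ℕ) : ℕ := sInf {s | s ∈ S ∧ s ≠ 0}

/-- The ratio r(S): least s ∈ S not divisible by the multiplicity. -/
noncomputable def ratio (S : Set ℕ) : ℕ := sInf {s | s ∈ S ∧ ¬ mult S ∣ s}

/-- The Frobenius number F(S): largest integer not in S. -/
noncomputable def frob (S : Set ℕ) : ℕ := sSup Sᶜ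

/-- The genus g(S): number of gaps of S. -/
noncomputable def genus (S : Set ℕ) : ℕ := Sᶜ.ncard

/-- Pseudo-Frobenius numbers of S. -/
def PF (S : Set ℕ) : Set ℕ := {x | x ∉ S ∧ ∀ s ∈ S, s ≠ 0 → x + s ∈ S}

/-- Special gaps of S. -/
def SG (S : Set ℕ) : Set ℕ := {x | x ∈ PF S ∧ 2 * x ∈ S}

/-- The Apéry set of n in S: elements s of S with s - n ∉ S (as integers). -/
def Ap (S : Set ℕ) (n : ℕ) : Set ℕ := {s | s ∈ S ∧ ¬ ∃ t ∈ S, t + n = s}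

/-- The minimal system of generators of a numerical semigroup:
    nonzero elements not expressible as a sum of two nonzero elements. -/
def msg (S : Set ℕ) : Set ℕ :=
  {x | x ∈ S ∧ x ≠ 0 ∧ ∀ a ∈ S, ∀ b ∈ S, a ≠ 0 → b ≠ 0 → x ≠ a + b}

/-- The embedding dimension e(S). -/
noncomputable def edim (S : Set ℕ) : ℕ := (msg S).ncard

/-- The submonoid of ℕ generated by a set A. -/
def closureSet (A : Set ℕ) : Set ℕ := (AddSubmonoid.closure A : Set ℕ)

/-- M is the minimum of the family R with respect to inclusion. -/
def IsMinOf (R : Set (Set ℕ)) (M : Set ℕ) : Prop := M ∈ R ∧ ∀ S ∈ R, M ⊆ S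

/-- A ratio-covariety. -/
def IsRatioCovariety (R : Set (Set ℕ)) : Prop :=
  R.Nonempty ∧ (∀ S ∈ R, IsNumericalSemigroup S) ∧
  (∃ M, IsMinOf R M) ∧
  (∀ S ∈ R, ∀ T ∈ R, S ∩ T ∈ R) ∧
  (∀ S ∈ R, ∀ M, IsMinOf R M → S ≠ M → S \ {ratio S} ∈ R)

/-- The family 𝓡(F,m) of numerical semigroups with Frobenius number F and multiplicity m. -/
def RFm (F m : ℕ) : Set (Set ℕ) :=
  {S | IsNumericalSemigroup S ∧ frob S = F ∧ mult S = m}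

/-- Δ(F,m) = ⟨m⟩ ∪ {F+1, →}. -/
def Delta (F m : ℕ) : Set ℕ := {n | m ∣ n} ∪ {n | F < n}

/-- X is an 𝓡-set: disjoint from min(𝓡) and contained in some element of 𝓡. -/
def IsRSet (R : Set (Set ℕ)) (X : Set ℕ) : Prop :=
  (∀ M, IsMinOf R M → X ∩ M = ∅) ∧ ∃ S ∈ R, X ⊆ S

/-- 𝓡[X]: the intersection of all elements of 𝓡 containing X. -/
def RGen (R : Set (Set ℕ)) (X : Set ℕ) : Set ℕ := ⋂₀ {S | S ∈ R ∧ X ⊆ S}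

/-- The 𝓡-rank of S. -/
noncomputable def Rrank (R : Set (Set ℕ)) (S : Set ℕ) : ℕ :=
  sInf {n | ∃ X, IsRSet R X ∧ RGen R X = S ∧ X.ncard = n}

/-- Membership in `RFm F m` without the `sSup` and `sInf` of the definition. The hypothesis `0 < F`
excludes `S = ℕ`, for which `frob` takes the junk value `0`. -/
lemma mem_RFm_iff {F m : ℕ} (hm : 0 < m) (hF0 : 0 < F) (S : Set ℕ) :
    S ∈ RFm F m ↔ 0 ∈ S ∧ (∀ a ∈ S, ∀ b ∈ S, a + b ∈ S) ∧ F ∉ S ∧ (∀ n, F < n → n ∈ S) ∧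
      m ∈ S ∧ ∀ s ∈ S, s ≠ 0 → m ≤ s := by
  constructor
  · rintro ⟨⟨h0, hadd, hfin⟩, hfrob, hmult⟩
    have hne : Sᶜ.Nonempty := by
      by_contra h
      rw [Set.not_nonempty_iff_eq_empty] at h
      simp [frob, h] at hfrob
      omega
    have hFS : F ∈ Sᶜ := by
      have := Nat.sSup_mem hne hfin.bddAbove
      rwa [← hfrob]
    have hgt : ∀ n, F < n → n ∈ S := by
      intro n hn
      by_contra h
      have : n ≤ frob S := le_csSup hfin.bddAbove h
      omega
    have hmem : m ∈ {s | s ∈ S ∧ s ≠ 0} := by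
      rw [← hmult]
      exact Nat.sInf_mem ⟨F + 1, hgt _ (by omega), by omega⟩
    refine ⟨h0, hadd, hFS, hgt, hmem.1, fun s hs hs0 => ?_⟩
    rw [← hmult]
    exact Nat.sInf_le ⟨hs, hs0⟩
  · rintro ⟨h0, hadd, hFS, hgt, hmS, hle⟩
    have hub : ∀ n ∈ Sᶜ, n ≤ F := fun n hn => by
      by_contra h
      exact hn (hgt n (by omega))
    refine ⟨⟨h0, hadd, (Set.finite_Iic F).subset hub⟩, ?_, ?_⟩
    · exact IsGreatest.csSup_eq ⟨hFS, hub⟩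
    · exact IsLeast.csInf_eq ⟨⟨hmS, by omega⟩, fun s hs => hle s hs.1 hs.2⟩

lemma multiple_mem {S : Set ℕ} {m : ℕ} (h0 : 0 ∈ S) (hadd : ∀ a ∈ S, ∀ b ∈ S, a + b ∈ S)
    (hm : m ∈ S) (k : ℕ) : m * k ∈ S := by
  induction k with
  | zero => simpa using h0
  | succ k ih => exact hadd _ ih _ hm

lemma Delta_isMin {F m : ℕ} (hm : 0 < m) (hmF : m < F) (hd : ¬ m ∣ F) :
    IsMinOf (RFm F m) (Delta F m) := by
  have hF0 : 0 < F := by omega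
  constructor
  · rw [mem_RFm_iff hm hF0]
    refine ⟨Or.inl (dvd_zero m), ?_, ?_, fun n hn => Or.inr hn, Or.inl dvd_rfl, ?_⟩
    · rintro a (ha | ha) b (hb | hb)
      · exact Or.inl (dvd_add ha hb)
      all_goals
        right
        simp only [Set.mem_ofPred_eq] at *
        omega
    · rintro (h | h)
      · exact hd h
      · exact lt_irrefl F h
    · rintro s (hs | hs) hs0
      · exact Nat.le_of_dvd (by omega) hs
      · exact (hmF.trans hs).le
  · intro S hS
    obtain ⟨h0, hadd, -, hgt, hmS, -⟩ := (mem_RFm_iff hm hF0 S).1 hS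
    rintro n (⟨k, rfl⟩ | hn)
    · exact multiple_mem h0 hadd hmS k
    · exact hgt n hn

lemma IsMinOf.unique {R : Set (Set ℕ)} {M N : Set ℕ} (hM : IsMinOf R M) (hN : IsMinOf R N) :
    M = N :=
  (hM.2 N hN.1).antisymm (hN.2 M hM.1)

lemma RGen_empty {R : Set (Set ℕ)} {M : Set ℕ} (hM : IsMinOf R M) : RGen R ∅ = M :=
  Set.Subset.antisymm (Set.sInter_subset_of_mem ⟨hM.1, Set.empty_subset M⟩)
    (Set.subset_sInter fun S hS => hM.2 S hS.1)

lemma closureSet_subset {S A : Set ℕ} (h0 : 0 ∈ S) (hadd : ∀ a ∈ S, ∀ b ∈ S, a + b ∈ S)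
    (hA : A ⊆ S) : closureSet A ⊆ S := by
  let P : AddSubmonoid ℕ :=
    { carrier := S, zero_mem' := h0, add_mem' := fun {a b} ha hb => hadd a ha b hb }
  exact AddSubmonoid.closure_le (S := P).2 hA

lemma subset_closureSet (A : Set ℕ) : A ⊆ closureSet A := AddSubmonoid.subset_closure

lemma gen_mem {F m x : ℕ} (hm : 0 < m) (hmx : m < x) (hxF : x < F)
    (hF : F ∉ closureSet {m, x}) : closureSet {m, x} ∪ {n | F + 1 ≤ n} ∈ RFm F m := by
  rw [mem_RFm_iff hm (by omega)]
  refine ⟨Or.inl (AddSubmonoid.zero_mem _), ?_, ?_, fun n hn => Or.inr hn,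
    Or.inl (subset_closureSet _ (by simp)), ?_⟩
  · rintro a (ha | ha) b (hb | hb)
    · exact Or.inl (AddSubmonoid.add_mem _ ha hb)
    all_goals
      right
      simp only [Set.mem_ofPred_eq] at *
      omega
  · rintro (h | h)
    · exact hF h
    · simp at h
  · rintro s (hs | hs) hs0
    · have : closureSet {m, x} ⊆ {n | n = 0 ∨ m ≤ n} := by
        refine closureSet_subset (Or.inl rfl) ?_ ?_
        · simp only [Set.mem_ofPred_eq]
          omega
        · rintro n (rfl | rfl)
          · exact Or.inr le_rfl
          · exact Or.inr hmx.le
      exact (this hs).resolve_left hs0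
    · simp only [Set.mem_ofPred_eq] at hs
      omega

lemma RGen_singleton {F m x : ℕ} (hm : 0 < m) (hmx : m < x) (hxF : x < F)
    (hF : F ∉ closureSet {m, x}) :
    RGen (RFm F m) {x} = closureSet {m, x} ∪ {n | F + 1 ≤ n} := by
  apply Set.Subset.antisymm
  · refine Set.sInter_subset_of_mem ⟨gen_mem hm hmx hxF hF, ?_⟩
    exact Set.singleton_subset_iff.2 (Or.inl (subset_closureSet _ (by simp)))
  · refine Set.subset_sInter ?_
    rintro S ⟨hS, hxS⟩
    obtain ⟨h0, hadd, -, hgt, hmS, -⟩ := (mem_RFm_iff hm (by omega) S).1 hS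
    refine Set.union_subset (closureSet_subset h0 hadd ?_) hgt
    exact Set.insert_subset hmS hxS

theorem Rrank_one_characterization (m r F : ℕ) (hm : 0 < m) (hmr : m < r) (hrF : r < F)
    (hdvd : ¬ m ∣ r) (hF : F ∉ closureSet {m, r}) :
    (closureSet {m, r} ∪ {n | F + 1 ≤ n} ∈ RFm F m ∧
      Rrank (RFm F m) (closureSet {m, r} ∪ {n | F + 1 ≤ n}) = 1) ∧
    ∀ S ∈ RFm F m, Rrank (RFm F m) S = 1 →
      ∃ r', m < r' ∧ r' < F ∧ ¬ m ∣ r' ∧ F ∉ closureSet {m, r'} ∧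
        S = closureSet {m, r'} ∪ {n | F + 1 ≤ n} := by
  have hF0 : 0 < F := by omega
  have hdF : ¬ m ∣ F := by
    rintro ⟨k, rfl⟩
    exact hF (multiple_mem (AddSubmonoid.zero_mem _) (fun a ha b hb => AddSubmonoid.add_mem _ ha hb)
      (subset_closureSet _ (by simp)) k)
  have hmin := Delta_isMin hm (hmr.trans hrF) hdF
  have hG := gen_mem hm hmr hrF hF
  have hrG : r ∈ closureSet {m, r} ∪ {n | F + 1 ≤ n} := Or.inl (subset_closureSet _ (by simp))
  have hrD : r ∉ Delta F m := by
    rintro (h | h)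
    · exact hdvd h
    · exact lt_asymm hrF h
  refine ⟨⟨hG, ?_⟩, ?_⟩
  · have h1 : 1 ∈ {n | ∃ X, IsRSet (RFm F m) X ∧
        RGen (RFm F m) X = closureSet {m, r} ∪ {n | F + 1 ≤ n} ∧ X.ncard = n} := by
      refine ⟨{r}, ⟨fun M hM => ?_, _, hG, Set.singleton_subset_iff.2 hrG⟩,
        RGen_singleton hm hmr hrF hF, Set.ncard_singleton r⟩
      rw [hM.unique hmin]
      exact Set.singleton_inter_eq_empty.2 hrD
    refine le_antisymm (Nat.sInf_le h1) (le_csInf ⟨1, h1⟩ ?_)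
    rintro n ⟨X, ⟨hX, -⟩, hgen, rfl⟩
    have hdisj := hX _ hmin
    -- Finiteness of `X` is needed because `ncard` is `0` on infinite sets.
    have hfin : X.Finite := (Set.finite_Iic F).subset fun y hy => by
      by_contra h
      have hFy : F < y := not_le.1 h
      have : y ∈ X ∩ Delta F m := ⟨hy, Or.inr hFy⟩
      simp [hdisj] at this
    rw [Nat.one_le_iff_ne_zero, Ne, Set.ncard_eq_zero hfin]
    rintro rfl
    rw [RGen_empty hmin] at hgen
    exact hrD (hgen ▸ hrG)
  · intro S _ hrank
    have hne := Nat.nonempty_of_pos_sInf (lt_of_lt_of_eq one_pos hrank.symm)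
    obtain ⟨X, ⟨hX, T, hT, hXT⟩, hgen, hcard⟩ := Nat.sInf_mem hne
    obtain ⟨x, rfl⟩ := Set.ncard_eq_one.1 (hcard.trans hrank)
    have hxD : x ∉ Delta F m := Set.singleton_inter_eq_empty.1 (hX _ hmin)
    have hxT : x ∈ T := hXT rfl
    obtain ⟨h0, hadd, hFT, -, hmT, hle⟩ := (mem_RFm_iff hm hF0 T).1 hT
    have hxd : ¬ m ∣ x := fun h => hxD (Or.inl h)
    have hxF : x < F := by
      have h1 : ¬ F < x := fun h => hxD (Or.inr h)
      have h2 : x ≠ F := fun h => hFT (h ▸ hxT)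
      omega
    have hmx : m < x := by
      have h1 : x ≠ 0 := fun h => hxd (h ▸ dvd_zero m)
      have h2 : m ≠ x := fun h => hxd h.dvd
      have h3 := hle x hxT h1
      omega
    have hFx : F ∉ closureSet {m, x} := fun h =>
      hFT (closureSet_subset h0 hadd (Set.insert_subset hmT hXT) h)
    exact ⟨x, hmx, hxF, hxd, hFx, hgen.symm.trans (RGen_singleton hm hmx hxF hFx)⟩
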